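/- arXiv:2404.17162 — 2 statements merged into one kernel-verified Lean document; each statement's English description precedes it below -/
import Mathlib

section
/- Let A be an Abelian group with |A| > 2. Every complete m-partite graph K_{n_1,n_2,...,n_m} is A-vertex magic. -/
open scoped Classical

/-- A graph `G` on a finite vertex type is `A`-vertex magic if there is a labeling of the
vertices by nonzero elements of `A` such that the sum of the labels over each open
neighborhood is a constant `μ`. -/
def vertexMagic {V : Type*} [Fintype V] (G : SimpleGraph V) (A : Type*) [AddCommGroup A] :
    Prop :=
  ∃ (l : V → A) (μ : A), (∀ v, l v ≠ 0) ∧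
    ∀ v : V, (∑ u : V, if G.Adj v u then l u else 0) = μ

/-! The non-neighbors of a vertex of a complete multipartite graph are exactly the vertices of its
own part, so it suffices to label each part with nonzero elements summing to a common `g ≠ 0`: every
weight is then the sum of all labels minus `g`. Such a labeling of a part is built one vertex at a
time. As `2 < |A|`, some label differs both from `0` and from the sum still required, so that what
is left for the remaining vertices is again nonzero. -/

section Labelings

variable {A : Type*} [AddCommGroup A] {α : Type*}

theorem exists_forall_ne_zero_sum_eq (hA : 2 < Cardinal.mk A) {s : Finset α}
    (hs : s.Nonempty) {g : A} (hg : g ≠ 0) :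
    ∃ f : α → A, (∀ a, f a ≠ 0) ∧ ∑ a ∈ s, f a = g := by
  induction hs using Finset.Nonempty.cons_induction generalizing g with
  | singleton a => exact ⟨fun _ => g, fun _ => hg, Finset.sum_singleton _ a⟩
  | cons a s ha _ ih =>
    obtain ⟨x, hx, hxg⟩ : ∃ x : A, x ≠ 0 ∧ x ≠ g := by
      simpa using Cardinal.exists_notMem_of_length_lt [0, g] (by simpa using hA)
    obtain ⟨f, hf, hsum⟩ := ih (sub_ne_zero.2 hxg.symm)
    refine ⟨Function.update f a x, (Function.forall_update_iff f fun _ y => y ≠ 0).2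
      ⟨hx, fun b _ => hf b⟩, ?_⟩
    rw [Finset.sum_cons, Function.update_self, Finset.sum_update_of_notMem ha, hsum,
      add_sub_cancel]

theorem exists_forall_ne_zero_sum_fiber_eq [Fintype α] {ι : Type*} {p : α → ι}
    (hp : Function.Surjective p) (hA : 2 < Cardinal.mk A) {g : ι → A} (hg : ∀ i, g i ≠ 0) :
    ∃ l : α → A, (∀ a, l a ≠ 0) ∧ ∀ i, ∑ a with p a = i, l a = g i := by
  have fiber_nonempty (i : ι) : (Finset.univ.filter (p · = i)).Nonempty :=
    (hp i).imp fun a ha => by simpa using ha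
  choose f hf hsum using fun i => exists_forall_ne_zero_sum_eq hA (fiber_nonempty i) (hg i)
  refine ⟨fun a => f (p a) a, fun a => hf _ _, fun i => ?_⟩
  rw [← hsum i]
  exact Finset.sum_congr rfl fun a ha => congrArg (f · a) (Finset.mem_filter.1 ha).2

end Labelings

section Graph

variable {V : Type*} [Fintype V] {G : SimpleGraph V} {A : Type*} [AddCommGroup A]

theorem vertexMagic_of_sum_not_adj_eq {l : V → A} (hl : ∀ v, l v ≠ 0) {c : A}
    (hc : ∀ v, ∑ u with ¬G.Adj v u, l u = c) : vertexMagic G A := by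
  refine ⟨l, ∑ u, l u - c, hl, fun v => ?_⟩
  rw [← Finset.sum_filter, eq_sub_iff_add_eq, ← hc v]
  exact Finset.sum_filter_add_sum_filter_not _ _ _

theorem stmt_3_general (hG : G.IsCompleteMultipartite) (hA : 2 < Cardinal.mk A) :
    vertexMagic G A := by
  have : Nontrivial A := Cardinal.one_lt_iff_nontrivial.1 (Cardinal.one_lt_two.trans hA)
  obtain ⟨g, hg⟩ := exists_ne (0 : A)
  obtain ⟨l, hl, hsum⟩ := exists_forall_ne_zero_sum_fiber_eq
    (Quotient.mk_surjective (s := hG.setoid)) hA fun _ => hg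
  refine vertexMagic_of_sum_not_adj_eq hl (c := g) fun v => ?_
  have class_iff (u : V) : (⟦u⟧ : Quotient hG.setoid) = ⟦v⟧ ↔ ¬G.Adj v u := by
    rw [G.adj_comm]
    exact Quotient.eq
  simpa only [class_iff] using hsum ⟦v⟧

end Graph

theorem stmt_3 {m : ℕ} (n : Fin m → ℕ) (hn : ∀ i, 0 < n i)
    (A : Type*) [AddCommGroup A] (hA : 2 < Cardinal.mk A) :
    vertexMagic (SimpleGraph.completeMultipartiteGraph (fun i : Fin m => Fin (n i))) A :=
  stmt_3_general (SimpleGraph.completeMultipartiteGraph.isCompleteMultipartite _) hA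
end

section
/- If n ≡ 0 (mod 4) and m ≥ 1, then the generalised friendship graph f_{n,m} is group vertex magic, i.e., f_{n,m} is A-vertex magic for every non-trivial Abelian group A. -/
open scoped Classical

/-- The generalised friendship graph `f_{n,m}`: `m` cycles of length `n` all meeting at a
single common vertex (the vertex `none`) and otherwise pairwise disjoint.  The vertices of
the `i`-th cycle other than the common vertex are `some (i, 0), …, some (i, n - 2)`, laid
out consecutively along the cycle with both ends joined to the common vertex. -/
def genFriendshipGraph (n m : ℕ) : SimpleGraph (Option (Fin m × Fin (n - 1))) where
  Adj x y :=
    match x, y with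
    | none, none => False
    | none, some (_, j) => j.val = 0 ∨ j.val = n - 2
    | some (_, j), none => j.val = 0 ∨ j.val = n - 2
    | some (i, j), some (i', j') => i = i' ∧ (j.val + 1 = j'.val ∨ j'.val + 1 = j.val)
  symm := by
    constructor
    rintro (_ | ⟨i, j⟩) (_ | ⟨i', j'⟩) h <;> simp_all; tauto
  loopless := by
    constructor
    rintro (_ | ⟨i, j⟩) h <;> simp_all

/-!
Going around each cycle from the common vertex, label the vertices `a, a, -a, -a, a, a, …`.
Since `4 ∣ n` the pattern closes up, so every cycle gives the common vertex the same label.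
The neighbors of a vertex come in pairs two steps apart on a cycle; such a pair has opposite
labels, so every neighborhood sum is `0`.
-/

theorem sum_ite_eq_add_of_iff {ι M : Type*} [Fintype ι] [AddCommMonoid M] {P : ι → Prop}
    [DecidablePred P] {x y : ι} (hxy : x ≠ y) (hP : ∀ u, P u ↔ u = x ∨ u = y) (f : ι → M) :
    (∑ u, if P u then f u else 0) = f x + f y := by
  rw [Fintype.sum_eq_add x y hxy fun u hu => if_neg fun h => ((hP u).1 h).elim hu.1 hu.2,
    if_pos ((hP x).2 (.inl rfl)), if_pos ((hP y).2 (.inr rfl))]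

theorem vertexMagic_bot (V A : Type*) [Fintype V] [AddCommGroup A] [Nontrivial A] :
    vertexMagic (⊥ : SimpleGraph V) A := by
  obtain ⟨a, ha⟩ := exists_ne (0 : A)
  exact ⟨fun _ => a, 0, fun _ => ha, fun _ => by simp⟩

theorem exists_ne_zero_antiperiodic_two (A : Type*) [AddCommGroup A] [Nontrivial A] :
    ∃ c : ℕ → A, (∀ p, c p ≠ 0) ∧ Function.Antiperiodic c 2 := by
  obtain ⟨a, ha⟩ := exists_ne (0 : A)
  refine ⟨fun p => (-1 : ℤˣ) ^ (p / 2) • a, fun p => (smul_ne_zero_iff_ne _).2 ha, fun p => ?_⟩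
  simp only [Nat.add_div_right p two_pos, pow_succ', neg_one_mul, Units.neg_smul]

namespace genFriendshipGraph

variable {n m : ℕ}

theorem zero_eq_bot : genFriendshipGraph 0 m = ⊥ := by
  ext (_ | ⟨_, j⟩) (_ | ⟨_, j'⟩)
  · simp
  · exact j'.elim0
  · exact j.elim0
  · exact j.elim0

/-- The vertex reached after `p` steps of the walk once around the `i`-th cycle, starting at the
common vertex. Both `p = 0` and `p = n` give the common vertex; indices beyond `n` carry no
meaning and are also sent there. -/
def cycleVertex (i : Fin m) (p : ℕ) : Option (Fin m × Fin (n - 1)) :=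
  if h : 0 < p ∧ p < n then some (i, ⟨p - 1, by omega⟩) else none

/-- The number of steps from the common vertex to a vertex on the walk used by `cycleVertex`; it is
`0` at the common vertex, where the walk also ends. -/
def cyclePosition : Option (Fin m × Fin (n - 1)) → ℕ
  | none => 0
  | some (_, j) => j + 1

theorem some_eq_cycleVertex_iff {i i' : Fin m} {j : Fin (n - 1)} {p : ℕ} :
    some (i', j) = cycleVertex i p ↔ i' = i ∧ j.val + 1 = p := by
  have hj := j.isLt
  unfold cycleVertex
  split_ifs with hp
  · simp only [Option.some.injEq, Prod.mk.injEq, Fin.ext_iff]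
    omega
  · simp only [false_iff]
    omega

theorem none_eq_cycleVertex_iff {i : Fin m} {p : ℕ} :
    (none : Option (Fin m × Fin (n - 1))) = cycleVertex i p ↔ p = 0 ∨ n ≤ p := by
  unfold cycleVertex
  split_ifs with hp
  · simp only [false_iff]
    omega
  · simp only [true_iff]
    omega

theorem apply_cyclePosition_cycleVertex {α : Type*} {c : ℕ → α} (hc : Function.Periodic c n)
    (i : Fin m) {p : ℕ} (hp : p ≤ n) :
    c (cyclePosition (cycleVertex i p : Option (Fin m × Fin (n - 1)))) = c p := by
  unfold cycleVertex
  split_ifs with h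
  · exact congrArg c (Nat.sub_add_cancel h.1)
  · obtain rfl | rfl : p = 0 ∨ p = n := by omega
    · rfl
    · exact hc.eq.symm

theorem adj_some_iff (i : Fin m) (j : Fin (n - 1)) (u : Option (Fin m × Fin (n - 1))) :
    (genFriendshipGraph n m).Adj (some (i, j)) u ↔
      u = cycleVertex i j ∨ u = cycleVertex i (j + 2) := by
  have hj := j.isLt
  obtain _ | ⟨i', j'⟩ := u
  · rw [none_eq_cycleVertex_iff, none_eq_cycleVertex_iff]
    simp only [genFriendshipGraph]
    omega
  · rw [some_eq_cycleVertex_iff, some_eq_cycleVertex_iff]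
    simp only [genFriendshipGraph]
    omega

theorem cycleVertex_ne_cycleVertex_add_two (hn : 3 ≤ n) (i : Fin m) {p : ℕ} (hp : p + 2 ≤ n) :
    (cycleVertex i p : Option (Fin m × Fin (n - 1))) ≠ cycleVertex i (p + 2) := by
  generalize hu : cycleVertex i p = u
  intro hu'
  obtain _ | ⟨i', j⟩ := u
  · have h₁ := none_eq_cycleVertex_iff.1 hu.symm
    have h₂ := none_eq_cycleVertex_iff.1 hu'
    omega
  · have h₁ := some_eq_cycleVertex_iff.1 hu.symm
    have h₂ := some_eq_cycleVertex_iff.1 hu'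
    omega

variable {M : Type*} [AddCommMonoid M]

theorem sum_adj_some (hn : 3 ≤ n) (f : Option (Fin m × Fin (n - 1)) → M) (i : Fin m)
    (j : Fin (n - 1)) :
    (∑ u, if (genFriendshipGraph n m).Adj (some (i, j)) u then f u else 0) =
      f (cycleVertex i j) + f (cycleVertex i (j + 2)) :=
  sum_ite_eq_add_of_iff (cycleVertex_ne_cycleVertex_add_two hn i (by omega)) (adj_some_iff i j) f

theorem sum_adj_none (hn : 3 ≤ n) (f : Option (Fin m × Fin (n - 1)) → M) :
    (∑ u, if (genFriendshipGraph n m).Adj none u then f u else 0) =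
      ∑ i, (f (cycleVertex i 1) + f (cycleVertex i (n - 1))) := by
  rw [Fintype.sum_option, if_neg (SimpleGraph.irrefl _), zero_add, Fintype.sum_prod_type]
  refine Finset.sum_congr rfl fun i _ => ?_
  have first : some (i, ⟨0, by omega⟩) = cycleVertex (n := n) i 1 :=
    some_eq_cycleVertex_iff.2 ⟨rfl, rfl⟩
  have last : some (i, ⟨n - 2, by omega⟩) = cycleVertex (n := n) i (n - 1) :=
    some_eq_cycleVertex_iff.2 ⟨rfl, show n - 2 + 1 = n - 1 by omega⟩
  rw [← first, ← last]
  refine sum_ite_eq_add_of_iff ?_ (fun j => ?_) fun j => f (some (i, j))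
  · rw [Ne, Fin.mk.injEq]
    omega
  · simp only [genFriendshipGraph, Fin.ext_iff]

theorem vertexMagic_of_antiperiodic {A : Type*} [AddCommGroup A] (hn : 3 ≤ n) {c : ℕ → A}
    (hc_ne : ∀ p, c p ≠ 0) (hc_anti : Function.Antiperiodic c 2)
    (hc_per : Function.Periodic c n) : vertexMagic (genFriendshipGraph n m) A := by
  have opposite (p : ℕ) : c p + c (p + 2) = 0 := by rw [hc_anti p, add_neg_cancel]
  refine ⟨fun v => c (cyclePosition v), 0, fun v => hc_ne _, ?_⟩
  rintro (_ | ⟨i, j⟩)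
  · rw [sum_adj_none hn fun v => c (cyclePosition v)]
    refine Finset.sum_eq_zero fun i _ => ?_
    rw [apply_cyclePosition_cycleVertex hc_per i (by omega),
      apply_cyclePosition_cycleVertex hc_per i (Nat.sub_le n 1), ← hc_per 1, add_comm,
      show 1 + n = n - 1 + 2 by omega, opposite]
  · rw [sum_adj_some hn (fun v => c (cyclePosition v)),
      apply_cyclePosition_cycleVertex hc_per i (by omega),
      apply_cyclePosition_cycleVertex hc_per i (by omega), opposite]

end genFriendshipGraph

theorem stmt_16 (n m : ℕ) (hn : n % 4 = 0) (hm : 1 ≤ m) :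
    ∀ (A : Type*) [AddCommGroup A], Nontrivial A →
      vertexMagic (genFriendshipGraph n m) A := by
  intro A _ _
  obtain rfl | hpos := n.eq_zero_or_pos
  · rw [genFriendshipGraph.zero_eq_bot]
    exact vertexMagic_bot _ A
  obtain ⟨k, rfl⟩ := Nat.dvd_of_mod_eq_zero hn
  obtain ⟨c, hc_ne, hc_anti⟩ := exists_ne_zero_antiperiodic_two A
  have hc_per : Function.Periodic c (4 * k) := by
    have hc_even := hc_anti.even_nsmul_periodic k
    rwa [smul_eq_mul, show 2 * k * 2 = 4 * k by ring] at hc_even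
  exact genFriendshipGraph.vertexMagic_of_antiperiodic (by omega) hc_ne hc_anti hc_per
end
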